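/- Let $\lambda_1,\dots,\lambda_5$ be nonzero complex numbers and define $W:\mathbb{C}^6\to\mathbb{C}$ by $W(c_1,\tilde c_1,c_2,\tilde c_2,c_3,\tilde c_3)=\lambda_1 c_1\tilde c_2\tilde c_3+\lambda_2 \tilde c_1 c_2 c_3+\lambda_3 (c_1\tilde c_1)^2+\lambda_4 (c_2\tilde c_2)^2+\lambda_5 (c_3\tilde c_3)^2$. Suppose at a point of $\mathbb{C}^6$ all six partial derivatives of $W$ vanish, $W=0$, and exactly two of the six coordinates are nonzero. Then the set of nonzero coordinates is one of exactly six pairs: $\{c_1,c_2\}$, $\{c_1,c_3\}$, $\{\tilde c_1,\tilde c_2\}$, $\{\tilde c_1,\tilde c_3\}$, $\{c_2,\tilde c_3\}$, or $\{c_3,\tilde c_2\}$. -/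

import Mathlib

/-!
Grouping the moduli as `a = (c₁, c̃₂, c̃₃)` and `b = (c̃₁, c₂, c₃)` turns the superpotential `W`
into `λ ∏ aᵢ + μ ∏ bᵢ + ∑ νᵢ (aᵢ bᵢ)²`, symmetric in `a ↔ b`. Multiplying each F-term by its own
variable gives `λ ∏ aⱼ = μ ∏ bⱼ = -2 νᵢ (aᵢ bᵢ)²` for every `i`. If some `aᵢ bᵢ` vanishes, then so
does `λ ∏ aⱼ`; if none does, `W = 0` forces the same, because for three indices `2 W = λ ∏ aⱼ`. So
every `aᵢ bᵢ` is zero, and the F-terms reduce to `∏_{j ≠ i} aⱼ = ∏_{j ≠ i} bⱼ = 0`. Hence at most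
one `aᵢ` and at most one `bⱼ` are nonzero, with `i ≠ j`, and there are `3 · 2 = 6` such pairs.
-/

open Finset Function

theorem ncard_support_add_two_le_of_prod_erase_eq_zero {ι R : Type*} [Fintype ι]
    [DecidableEq ι] [Nonempty ι] [CommMonoidWithZero R] [NoZeroDivisors R] [Nontrivial R]
    {a : ι → R} (h : ∀ i, ∏ j ∈ univ.erase i, a j = 0) :
    (support a).ncard + 2 ≤ Fintype.card ι := by
  obtain ⟨i₀⟩ := ‹Nonempty ι›
  obtain ⟨i, -, hi⟩ := prod_eq_zero_iff.1 (h i₀)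
  obtain ⟨j, hj, haj⟩ := prod_eq_zero_iff.1 (h i)
  have hpair : ({i, j} : Set ι) ⊆ (support a)ᶜ := by
    rintro k (rfl | rfl) <;> simpa
  calc (support a).ncard + 2
      = (support a).ncard + ({i, j} : Set ι).ncard := by
        rw [Set.ncard_pair (ne_of_mem_erase hj).symm]
    _ ≤ (support a).ncard + (support a)ᶜ.ncard := by gcongr; exact Set.toFinite _
    _ = Fintype.card ι := by rw [Set.ncard_add_ncard_compl, Nat.card_eq_fintype_card]

theorem ncard_support_eq_sum_indicator {ι R : Type*} [Fintype ι] [Zero R] (v : ι → R) :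
    (support v).ncard = ∑ i, Set.indicator {0}ᶜ 1 (v i) := by
  classical
  simp only [Set.indicator_apply, Set.mem_compl_singleton_iff, Pi.one_apply, ← card_filter,
    ← Set.ncard_coe_finset, coe_filter_univ]
  rfl

section Algebra

variable {ι R : Type*} [Fintype ι] [CommSemiring R]

/-- The superpotential `λ ∏ aᵢ + μ ∏ bᵢ + ∑ νᵢ (aᵢ bᵢ)²` with couplings `l = λ`, `m = μ`,
`n = ν`. The paper's moduli are regrouped as `a = (C₁, C̃₂, C̃₃)` and `b = (C̃₁, C₂, C₃)`. -/
def superpotential (l m : R) (n a b : ι → R) : R :=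
  l * ∏ i, a i + m * ∏ i, b i + ∑ i, n i * (a i * b i) ^ 2

theorem superpotential_comm (l m : R) (n a b : ι → R) :
    superpotential l m n a b = superpotential m l n b a := by
  simp only [superpotential, mul_comm (a _)]
  ring

variable [DecidableEq ι]

/-- The F-term of the modulus `aᵢ`, that is, the partial derivative `∂W/∂aᵢ` of the superpotential.
Since the superpotential is symmetric, `∂W/∂bᵢ` is obtained by exchanging `a` with `b` and using the
other cubic coupling. -/
def fTerm (l : R) (n a b : ι → R) (i : ι) : R :=
  l * ∏ j ∈ univ.erase i, a j + 2 * n i * a i * b i ^ 2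

/-- F-flatness: all F-terms of the superpotential vanish at `(a, b)`. -/
structure IsFFlat (l m : R) (n a b : ι → R) : Prop where
  left : ∀ i, fTerm l n a b i = 0
  right : ∀ i, fTerm m n b a i = 0

theorem superpotential_update_left (l m : R) (n a b : ι → R) (i : ι) (z : R) :
    superpotential l m n (update a i z) b =
      n i * b i ^ 2 * z ^ 2 + l * (∏ j ∈ univ.erase i, a j) * z +
        (m * ∏ j, b j + ∑ j ∈ univ.erase i, n j * (a j * b j) ^ 2) := by
  have hprod : ∏ j, update a i z j = z * ∏ j ∈ univ.erase i, a j := by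
    rw [prod_update_of_mem (mem_univ i), sdiff_singleton_eq_erase]
  have hsum : ∑ j ∈ univ.erase i, n j * (update a i z j * b j) ^ 2 =
      ∑ j ∈ univ.erase i, n j * (a j * b j) ^ 2 :=
    sum_congr rfl fun j hj => by rw [update_of_ne (ne_of_mem_erase hj)]
  rw [superpotential, hprod, ← add_sum_erase _ _ (mem_univ i), hsum, update_self]
  ring

theorem mul_fTerm (l : R) (n a b : ι → R) (i : ι) :
    a i * fTerm l n a b i = l * ∏ j, a j + 2 * n i * (a i * b i) ^ 2 := by
  rw [fTerm, ← mul_prod_erase univ a (mem_univ i)]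
  ring

theorem IsFFlat.symm {l m : R} {n a b : ι → R} (h : IsFFlat l m n a b) : IsFFlat m l n b a :=
  ⟨h.right, h.left⟩

end Algebra

namespace IsFFlat

variable {ι R : Type*} [Fintype ι] [DecidableEq ι] [CommRing R] {l m : R} {n a b : ι → R}

theorem mul_prod_eq (h : IsFFlat l m n a b) (i : ι) :
    l * ∏ j, a j = -(2 * n i * (a i * b i) ^ 2) := by
  rw [eq_neg_iff_add_eq_zero, ← mul_fTerm, h.left, mul_zero]

theorem mul_prod_left_eq_mul_prod_right [Nonempty ι] (h : IsFFlat l m n a b) :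
    l * ∏ j, a j = m * ∏ j, b j := by
  obtain ⟨i⟩ := ‹Nonempty ι›
  rw [h.mul_prod_eq i, h.symm.mul_prod_eq i, mul_comm (a i)]

theorem two_mul_superpotential [Nonempty ι] (h : IsFFlat l m n a b) :
    2 * superpotential l m n a b = (4 - Fintype.card ι) * (l * ∏ j, a j) := by
  have hquartic : 2 * ∑ i, n i * (a i * b i) ^ 2 = -(Fintype.card ι * (l * ∏ j, a j)) :=
    calc 2 * ∑ i, n i * (a i * b i) ^ 2
        = ∑ _i : ι, -(l * ∏ j, a j) := by
          rw [mul_sum]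
          exact sum_congr rfl fun i _ => by rw [h.mul_prod_eq i]; ring
      _ = -(Fintype.card ι * (l * ∏ j, a j)) := by simp
  rw [superpotential, mul_add, hquartic, ← h.mul_prod_left_eq_mul_prod_right]
  ring

variable [IsDomain R]

theorem mul_prod_eq_zero [Nonempty ι] (h : IsFFlat l m n a b)
    (hcard : (Fintype.card ι : R) ≠ 4)
    (hW : (∀ i, a i * b i ≠ 0) → superpotential l m n a b = 0) : l * ∏ i, a i = 0 := by
  by_cases hab : ∀ i, a i * b i ≠ 0
  · have hW' := h.two_mul_superpotential
    rw [hW hab, mul_zero, zero_eq_mul] at hW'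
    exact hW'.resolve_left (sub_ne_zero.2 hcard.symm)
  · push Not at hab
    obtain ⟨i, hi⟩ := hab
    rw [h.mul_prod_eq i, hi]
    ring

theorem left_mul_right_eq_zero [NeZero (2 : R)] (h : IsFFlat l m n a b)
    (hprod : l * ∏ j, a j = 0) {i : ι} (hn : n i ≠ 0) : a i * b i = 0 := by
  rw [h.mul_prod_eq i, neg_eq_zero] at hprod
  exact pow_eq_zero_iff two_ne_zero |>.1 <|
    (mul_eq_zero_iff_left (mul_ne_zero two_ne_zero hn)).1 hprod

theorem prod_erase_eq_zero (h : IsFFlat l m n a b) (hl : l ≠ 0) {i : ι} (hab : a i * b i = 0) :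
    ∏ j ∈ univ.erase i, a j = 0 := by
  have hquartic : 2 * n i * a i * b i ^ 2 = 0 := by linear_combination 2 * n i * b i * hab
  have hterm := h.left i
  rw [fTerm, hquartic, add_zero] at hterm
  exact (mul_eq_zero_iff_left hl).1 hterm

theorem exists_support_eq_singleton [NeZero (2 : R)] (h : IsFFlat l m n a b)
    (hι : Fintype.card ι = 3) (hl : l ≠ 0) (hm : m ≠ 0) (hn : ∀ i, n i ≠ 0)
    (hW : (∀ i, a i * b i ≠ 0) → superpotential l m n a b = 0)
    (htwo : 2 ≤ (support a).ncard + (support b).ncard) :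
    ∃ i j, i ≠ j ∧ support a = {i} ∧ support b = {j} := by
  have : Nonempty ι := Fintype.card_pos_iff.1 (by omega)
  have hcard : (Fintype.card ι : R) ≠ 4 := by
    rw [hι, ← sub_ne_zero]
    norm_num
  have hab (i : ι) : a i * b i = 0 :=
    h.left_mul_right_eq_zero (h.mul_prod_eq_zero hcard hW) (hn i)
  have ha := ncard_support_add_two_le_of_prod_erase_eq_zero
    fun i => h.prod_erase_eq_zero hl (hab i)
  have hb := ncard_support_add_two_le_of_prod_erase_eq_zero
    fun i => h.symm.prod_erase_eq_zero hm (mul_comm (a i) (b i) ▸ hab i)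
  obtain ⟨i, hi⟩ := Set.ncard_eq_one.1 (show (support a).ncard = 1 by omega)
  obtain ⟨j, hj⟩ := Set.ncard_eq_one.1 (show (support b).ncard = 1 by omega)
  refine ⟨i, j, ?_, hi, hj⟩
  rintro rfl
  have hai : a i ≠ 0 := mem_support.1 (hi ▸ Set.mem_singleton i)
  have hbi : b i ≠ 0 := mem_support.1 (hj ▸ Set.mem_singleton i)
  exact mul_ne_zero hai hbi (hab i)

end IsFFlat

section Derivative

variable {ι 𝕜 : Type*} [Fintype ι] [DecidableEq ι] [NontriviallyNormedField 𝕜]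

theorem deriv_superpotential_update_left (l m : 𝕜) (n a b : ι → 𝕜) (i : ι) :
    deriv (fun z => superpotential l m n (update a i z) b) (a i) = fTerm l n a b i := by
  simp only [superpotential_update_left]
  have hsq := (hasDerivAt_pow 2 (a i)).const_mul (n i * b i ^ 2)
  have hlin := (hasDerivAt_id (a i)).const_mul (l * ∏ j ∈ univ.erase i, a j)
  refine ((hsq.add hlin).add_const _).deriv.trans ?_
  rw [fTerm]
  push_cast
  ring

theorem deriv_superpotential_update_right (l m : 𝕜) (n a b : ι → 𝕜) (i : ι) :
    deriv (fun z => superpotential l m n a (update b i z)) (b i) = fTerm m n b a i := by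
  simp only [superpotential_comm l m n a, deriv_superpotential_update_left]

end Derivative

theorem superpotential_fin_three {R : Type*} [CommSemiring R]
    (l1 l2 l3 l4 l5 c1 tc1 c2 tc2 c3 tc3 : R) :
    superpotential l1 l2 ![l3, l4, l5] ![c1, tc2, tc3] ![tc1, c2, c3] =
      l1 * c1 * tc2 * tc3 + l2 * tc1 * c2 * c3 +
        l3 * (c1 * tc1) ^ 2 + l4 * (c2 * tc2) ^ 2 + l5 * (c3 * tc3) ^ 2 := by
  simp only [superpotential, Fin.prod_univ_three, Fin.sum_univ_three, Matrix.cons_val]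
  ring

theorem ncard_ne_zero_eq_ncard_support_add {R : Type*} [Zero R] (c1 tc1 c2 tc2 c3 tc3 : R) :
    Set.ncard {i : Fin 6 | ![c1, tc1, c2, tc2, c3, tc3] i ≠ 0} =
      (support ![c1, tc2, tc3]).ncard + (support ![tc1, c2, c3]).ncard := by
  change (support ![c1, tc1, c2, tc2, c3, tc3]).ncard = _
  simp only [ncard_support_eq_sum_indicator, Fin.sum_univ_six, Fin.sum_univ_three,
    Matrix.cons_val]
  ring

theorem stmt1_general {𝕜 : Type*} [NontriviallyNormedField 𝕜] [NeZero (2 : 𝕜)]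
    (l1 l2 l3 l4 l5 : 𝕜)
    (hl1 : l1 ≠ 0) (hl2 : l2 ≠ 0) (hl3 : l3 ≠ 0) (hl4 : l4 ≠ 0) (hl5 : l5 ≠ 0)
    (c1 tc1 c2 tc2 c3 tc3 : 𝕜)
    (hd1 : deriv (fun z : 𝕜 => l1 * z * tc2 * tc3 + l2 * tc1 * c2 * c3 +
      l3 * (z * tc1) ^ 2 + l4 * (c2 * tc2) ^ 2 + l5 * (c3 * tc3) ^ 2) c1 = 0)
    (hd2 : deriv (fun z : 𝕜 => l1 * c1 * tc2 * tc3 + l2 * z * c2 * c3 +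
      l3 * (c1 * z) ^ 2 + l4 * (c2 * tc2) ^ 2 + l5 * (c3 * tc3) ^ 2) tc1 = 0)
    (hd3 : deriv (fun z : 𝕜 => l1 * c1 * tc2 * tc3 + l2 * tc1 * z * c3 +
      l3 * (c1 * tc1) ^ 2 + l4 * (z * tc2) ^ 2 + l5 * (c3 * tc3) ^ 2) c2 = 0)
    (hd4 : deriv (fun z : 𝕜 => l1 * c1 * z * tc3 + l2 * tc1 * c2 * c3 +
      l3 * (c1 * tc1) ^ 2 + l4 * (c2 * z) ^ 2 + l5 * (c3 * tc3) ^ 2) tc2 = 0)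
    (hd5 : deriv (fun z : 𝕜 => l1 * c1 * tc2 * tc3 + l2 * tc1 * c2 * z +
      l3 * (c1 * tc1) ^ 2 + l4 * (c2 * tc2) ^ 2 + l5 * (z * tc3) ^ 2) c3 = 0)
    (hd6 : deriv (fun z : 𝕜 => l1 * c1 * tc2 * z + l2 * tc1 * c2 * c3 +
      l3 * (c1 * tc1) ^ 2 + l4 * (c2 * tc2) ^ 2 + l5 * (c3 * z) ^ 2) tc3 = 0)
    (hW : c1 * tc1 * c2 * tc2 * c3 * tc3 ≠ 0 →
      l1 * c1 * tc2 * tc3 + l2 * tc1 * c2 * c3 +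
        l3 * (c1 * tc1) ^ 2 + l4 * (c2 * tc2) ^ 2 + l5 * (c3 * tc3) ^ 2 = 0)
    (htwo : 2 ≤ Set.ncard {i : Fin 6 | ![c1, tc1, c2, tc2, c3, tc3] i ≠ 0}) :
    (c1 ≠ 0 ∧ c2 ≠ 0 ∧ tc1 = 0 ∧ tc2 = 0 ∧ c3 = 0 ∧ tc3 = 0) ∨
    (c1 ≠ 0 ∧ c3 ≠ 0 ∧ tc1 = 0 ∧ c2 = 0 ∧ tc2 = 0 ∧ tc3 = 0) ∨
    (tc1 ≠ 0 ∧ tc2 ≠ 0 ∧ c1 = 0 ∧ c2 = 0 ∧ c3 = 0 ∧ tc3 = 0) ∨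
    (tc1 ≠ 0 ∧ tc3 ≠ 0 ∧ c1 = 0 ∧ c2 = 0 ∧ tc2 = 0 ∧ c3 = 0) ∨
    (c2 ≠ 0 ∧ tc3 ≠ 0 ∧ c1 = 0 ∧ tc1 = 0 ∧ tc2 = 0 ∧ c3 = 0) ∨
    (c3 ≠ 0 ∧ tc2 ≠ 0 ∧ c1 = 0 ∧ tc1 = 0 ∧ c2 = 0 ∧ tc3 = 0) := by
  simp only [← superpotential_fin_three] at hd1 hd2 hd3 hd4 hd5 hd6 hW
  have hflat : IsFFlat l1 l2 ![l3, l4, l5] ![c1, tc2, tc3] ![tc1, c2, c3] := by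
    constructor <;> intro i
    · rw [← deriv_superpotential_update_left l1 l2]
      fin_cases i <;> simpa
    · rw [← deriv_superpotential_update_right l1 l2]
      fin_cases i <;> simpa
  rw [ncard_ne_zero_eq_ncard_support_add] at htwo
  obtain ⟨i, j, hij, hi, hj⟩ := hflat.exists_support_eq_singleton (Fintype.card_fin 3) hl1 hl2
    (by simp [Fin.forall_fin_succ, *])
    (fun h => hW (by simpa [Fin.forall_fin_succ, and_assoc, and_comm, and_left_comm] using h)) htwo
  simp only [Set.ext_iff, mem_support, Set.mem_singleton_iff, Fin.forall_fin_succ] at hi hj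
  fin_cases i <;> fin_cases j <;> simp_all

/-- At a critical point of the superpotential
`W = λ₁ c₁ c̃₂ c̃₃ + λ₂ c̃₁ c₂ c₃ + λ₃ (c₁ c̃₁)² + λ₄ (c₂ c̃₂)² + λ₅ (c₃ c̃₃)²`
with `W = 0`, if exactly two of the six coordinates are nonzero, then the set of
nonzero coordinates is one of exactly six pairs:
`{c₁,c₂}`, `{c₁,c₃}`, `{c̃₁,c̃₂}`, `{c̃₁,c̃₃}`, `{c₂,c̃₃}`, `{c₃,c̃₂}`. -/
theorem stmt1 (l1 l2 l3 l4 l5 : ℂ)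
    (hl1 : l1 ≠ 0) (hl2 : l2 ≠ 0) (hl3 : l3 ≠ 0) (hl4 : l4 ≠ 0) (hl5 : l5 ≠ 0)
    (c1 tc1 c2 tc2 c3 tc3 : ℂ)
    (hd1 : deriv (fun z : ℂ => l1 * z * tc2 * tc3 + l2 * tc1 * c2 * c3 +
      l3 * (z * tc1) ^ 2 + l4 * (c2 * tc2) ^ 2 + l5 * (c3 * tc3) ^ 2) c1 = 0)
    (hd2 : deriv (fun z : ℂ => l1 * c1 * tc2 * tc3 + l2 * z * c2 * c3 +
      l3 * (c1 * z) ^ 2 + l4 * (c2 * tc2) ^ 2 + l5 * (c3 * tc3) ^ 2) tc1 = 0)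
    (hd3 : deriv (fun z : ℂ => l1 * c1 * tc2 * tc3 + l2 * tc1 * z * c3 +
      l3 * (c1 * tc1) ^ 2 + l4 * (z * tc2) ^ 2 + l5 * (c3 * tc3) ^ 2) c2 = 0)
    (hd4 : deriv (fun z : ℂ => l1 * c1 * z * tc3 + l2 * tc1 * c2 * c3 +
      l3 * (c1 * tc1) ^ 2 + l4 * (c2 * z) ^ 2 + l5 * (c3 * tc3) ^ 2) tc2 = 0)
    (hd5 : deriv (fun z : ℂ => l1 * c1 * tc2 * tc3 + l2 * tc1 * c2 * z +
      l3 * (c1 * tc1) ^ 2 + l4 * (c2 * tc2) ^ 2 + l5 * (z * tc3) ^ 2) c3 = 0)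
    (hd6 : deriv (fun z : ℂ => l1 * c1 * tc2 * z + l2 * tc1 * c2 * c3 +
      l3 * (c1 * tc1) ^ 2 + l4 * (c2 * tc2) ^ 2 + l5 * (c3 * z) ^ 2) tc3 = 0)
    (hW : l1 * c1 * tc2 * tc3 + l2 * tc1 * c2 * c3 +
      l3 * (c1 * tc1) ^ 2 + l4 * (c2 * tc2) ^ 2 + l5 * (c3 * tc3) ^ 2 = 0)
    (htwo : Set.ncard {i : Fin 6 | ![c1, tc1, c2, tc2, c3, tc3] i ≠ 0} = 2) :
    (c1 ≠ 0 ∧ c2 ≠ 0 ∧ tc1 = 0 ∧ tc2 = 0 ∧ c3 = 0 ∧ tc3 = 0) ∨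
    (c1 ≠ 0 ∧ c3 ≠ 0 ∧ tc1 = 0 ∧ c2 = 0 ∧ tc2 = 0 ∧ tc3 = 0) ∨
    (tc1 ≠ 0 ∧ tc2 ≠ 0 ∧ c1 = 0 ∧ c2 = 0 ∧ c3 = 0 ∧ tc3 = 0) ∨
    (tc1 ≠ 0 ∧ tc3 ≠ 0 ∧ c1 = 0 ∧ c2 = 0 ∧ tc2 = 0 ∧ c3 = 0) ∨
    (c2 ≠ 0 ∧ tc3 ≠ 0 ∧ c1 = 0 ∧ tc1 = 0 ∧ tc2 = 0 ∧ c3 = 0) ∨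
    (c3 ≠ 0 ∧ tc2 ≠ 0 ∧ c1 = 0 ∧ tc1 = 0 ∧ c2 = 0 ∧ tc3 = 0) := by
  exact stmt1_general l1 l2 l3 l4 l5 hl1 hl2 hl3 hl4 hl5 c1 tc1 c2 tc2 c3 tc3
    hd1 hd2 hd3 hd4 hd5 hd6 (fun _ => hW) htwo.ge
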